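/- arXiv:2106.00500 — 3 statements merged into one kernel-verified Lean document; each statement's English description precedes it below -/
import Mathlib

section
/- Let H, A, B be Hermitian matrices of the same finite size and β > 0, and for λ ∈ ℝ let ⟨·⟩_λ denote the Gibbs expectation of the Hamiltonian H − λA at inverse temperature β, i.e. ⟨C⟩_λ = Tr(e^{−β(H−λA)} C)/Tr(e^{−β(H−λA)}). Then the map λ ↦ ⟨B⟩_λ is differentiable and its derivative at λ = 0 equals β(⟨A|B⟩ − ⟨A⟩⟨B⟩), where ⟨A|B⟩ = ∫_0^1 ⟨e^{tβH} A e^{−tβH} B⟩ dt and ⟨·⟩ = ⟨·⟩_0. -/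
open Matrix

noncomputable section

/-- Complex-valued Gibbs expectation `⟨A⟩ = Tr(e^{-βH} A)/Tr(e^{-βH})`. -/
def gibbsC {n : Type*} [Fintype n] [DecidableEq n] (β : ℝ) (H A : Matrix n n ℂ) : ℂ :=
  (NormedSpace.exp ((-β) • H) * A).trace / (NormedSpace.exp ((-β) • H)).trace

/-- Real-valued Gibbs expectation (real part; for Hermitian observables this is `⟨A⟩`). -/
def gibbs {n : Type*} [Fintype n] [DecidableEq n] (β : ℝ) (H A : Matrix n n ℂ) : ℝ :=
  (gibbsC β H A).re

/-- Complex-valued Duhamel–Kubo–Bogolyubov product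
`⟨A|B⟩ = ∫_0^1 ⟨e^{tβH} A* e^{-tβH} B⟩ dt`. -/
def duhamelC {n : Type*} [Fintype n] [DecidableEq n] (β : ℝ) (H A B : Matrix n n ℂ) : ℂ :=
  ∫ t in (0:ℝ)..1,
    gibbsC β H (NormedSpace.exp ((t * β) • H) * Aᴴ *
      NormedSpace.exp ((-(t * β)) • H) * B)

/-- Real-valued Duhamel–Kubo–Bogolyubov product. -/
def duhamel {n : Type*} [Fintype n] [DecidableEq n] (β : ℝ) (H A B : Matrix n n ℂ) : ℝ :=
  (duhamelC β H A B).re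

theorem aux_duhamel {E : Type*} [NormedRing E] [NormedAlgebra ℝ E] [CompleteSpace E]
    (X A : E) (s : ℝ) :
    NormedSpace.exp (X + s • A) - NormedSpace.exp X
      = s • ∫ t in (0:ℝ)..1, NormedSpace.exp ((1 - t) • X) * A *
          NormedSpace.exp (t • (X + s • A)) := by
  let _ : NormedAlgebra ℚ E := NormedAlgebra.restrictScalars ℚ ℝ E
  have hc : Continuous (NormedSpace.exp : E → E) := NormedSpace.exp_continuous
  have hd : ∀ t : ℝ, HasDerivAt
      (fun t : ℝ => NormedSpace.exp ((1 - t) • X) * NormedSpace.exp (t • (X + s • A)))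
      (s • (NormedSpace.exp ((1 - t) • X) * A * NormedSpace.exp (t • (X + s • A)))) t := by
    intro t
    have h1 := hasDerivAt_exp_smul_const (𝕂 := ℝ) X (1 - t)
    have h2 := hasDerivAt_exp_smul_const' (𝕂 := ℝ) (X + s • A) t
    have h3 : HasDerivAt (fun t : ℝ => 1 - t) (-1) t := by
      simpa using (hasDerivAt_id t).const_sub 1
    have h4 := h1.scomp t h3
    have h5 := h4.mul h2
    refine h5.congr_deriv ?_
    simp only [Function.comp, neg_smul, one_smul, add_mul, mul_add, neg_mul, mul_assoc,
      smul_mul_assoc, mul_smul_comm]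
    abel
  rw [← intervalIntegral.integral_smul, intervalIntegral.integral_eq_sub_of_hasDerivAt
    (fun t _ => hd t)]
  · simp
  · apply Continuous.intervalIntegrable
    fun_prop

theorem aux_deriv {E : Type*} [NormedRing E] [NormedAlgebra ℝ E] [CompleteSpace E]
    (X A : E) (l : E →L[ℝ] ℂ) :
    HasDerivAt (fun s : ℝ => l (NormedSpace.exp (X + s • A)))
      (∫ t in (0:ℝ)..1, l (NormedSpace.exp ((1 - t) • X) * A *
          NormedSpace.exp (t • X))) 0 := by
  let _ : NormedAlgebra ℚ E := NormedAlgebra.restrictScalars ℚ ℝ E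
  have hc : Continuous (NormedSpace.exp : E → E) := NormedSpace.exp_continuous
  have hg : Continuous (fun s : ℝ => ∫ t in (0:ℝ)..1, NormedSpace.exp ((1 - t) • X) * A *
          NormedSpace.exp (t • (X + s • A))) := by
    apply intervalIntegral.continuous_parametric_intervalIntegral_of_continuous'
    unfold Function.uncurry
    fun_prop
  have key : HasDerivAt (fun s : ℝ => NormedSpace.exp (X + s • A))
      (∫ t in (0:ℝ)..1, NormedSpace.exp ((1 - t) • X) * A * NormedSpace.exp (t • X)) 0 := by
    rw [hasDerivAt_iff_tendsto_slope_zero]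
    have := (hg.tendsto 0).mono_left (nhdsWithin_le_nhds (s := {0}ᶜ))
    simp only [zero_smul, add_zero] at this
    refine this.congr' ?_
    filter_upwards [self_mem_nhdsWithin] with s hs
    have hs' : s ≠ 0 := hs
    simp only [zero_add, zero_smul, add_zero]
    rw [aux_duhamel, smul_smul, inv_mul_cancel₀ hs', one_smul]
  have h2 := l.hasFDerivAt.comp_hasDerivAt (0:ℝ) key
  rw [ContinuousLinearMap.intervalIntegral_comp_comm]
  · exact h2
  · apply Continuous.intervalIntegrable
    fun_prop

theorem aux_mat {n : Type*} [Fintype n] [DecidableEq n] (X A B : Matrix n n ℂ) :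
    HasDerivAt (fun s : ℝ => (NormedSpace.exp (X + s • A) * B).trace)
      (∫ t in (0:ℝ)..1, (NormedSpace.exp ((1 - t) • X) * A *
          NormedSpace.exp (t • X) * B).trace) 0 := by
  let _ : NormedRing (Matrix n n ℂ) := Matrix.linftyOpNormedRing
  let _ : NormedAlgebra ℝ (Matrix n n ℂ) := Matrix.linftyOpNormedAlgebra
  let l : Matrix n n ℂ →ₗ[ℝ] ℂ :=
    (Matrix.traceLinearMap n ℝ ℂ) ∘ₗ (LinearMap.mulRight ℝ B)
  exact aux_deriv X A (LinearMap.toContinuousLinearMap l)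

theorem aux_exp_add {n : Type*} [Fintype n] [DecidableEq n] (X : Matrix n n ℂ) (a b : ℝ) :
    NormedSpace.exp (a • X) * NormedSpace.exp (b • X) = NormedSpace.exp ((a + b) • X) := by
  rw [add_smul, Matrix.exp_add_of_commute]
  exact ((Commute.refl X).smul_left a).smul_right b

theorem aux_herm {n : Type*} {X : Matrix n n ℂ} (hX : X.IsHermitian) (a : ℝ) :
    (a • X).IsHermitian := by
  unfold Matrix.IsHermitian
  rw [Matrix.conjTranspose_smul, hX.eq]
  simp

theorem aux_pos {n : Type*} [Fintype n] [DecidableEq n] [Nonempty n] (X : Matrix n n ℂ)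
    (hX : X.IsHermitian) : (NormedSpace.exp X).trace ≠ 0 := by
  have h1 : NormedSpace.exp X = (NormedSpace.exp ((1/2:ℝ) • X))ᴴ *
      NormedSpace.exp ((1/2:ℝ) • X) := by
    rw [(aux_herm hX (1/2)).exp.eq, aux_exp_add]
    norm_num
  intro h
  open scoped ComplexOrder in
  rw [h1, Matrix.trace_conjTranspose_mul_self_eq_zero_iff] at h
  have hu := Matrix.isUnit_exp ((1/2:ℝ) • X)
  rw [h] at hu
  exact not_isUnit_zero hu

theorem aux_real {n : Type*} [Fintype n] [DecidableEq n] (X A : Matrix n n ℂ)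
    (hX : X.IsHermitian) (hA : A.IsHermitian) :
    star (NormedSpace.exp X * A).trace = (NormedSpace.exp X * A).trace := by
  rw [← Matrix.trace_conjTranspose, Matrix.conjTranspose_mul, hA.eq, hX.exp.eq,
    Matrix.trace_mul_comm]

theorem aux_main {n : Type*} [Fintype n] [DecidableEq n] [Nonempty n]
    (β : ℝ) (H A B : Matrix n n ℂ) (hH : H.IsHermitian) (hA : A.IsHermitian) :
    HasDerivAt (fun lam : ℝ => gibbs β (H - lam • A) B)
      (β * (duhamel β H A B - gibbs β H A * gibbs β H B)) 0 := by
  have hZ : (NormedSpace.exp ((-β) • H)).trace ≠ 0 := aux_pos _ (aux_herm hH _)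
  have hN := aux_mat ((-β) • H) (β • A) B
  have hD := aux_mat ((-β) • H) (β • A) 1
  have eN : (∫ t in (0:ℝ)..1, (NormedSpace.exp ((1 - t) • ((-β) • H)) * (β • A) *
          NormedSpace.exp (t • ((-β) • H)) * B).trace)
      = β * (NormedSpace.exp ((-β) • H)).trace * duhamelC β H A B := by
    unfold duhamelC gibbsC
    rw [← intervalIntegral.integral_const_mul]
    congr 1
    funext t
    rw [hA.eq, ← mul_assoc, ← mul_assoc, ← mul_assoc, aux_exp_add, smul_smul, smul_smul]
    have e1 : (1 - t) * -β = -β + t * β := by ring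
    have e2 : t * -β = -(t * β) := by ring
    rw [e1, e2, mul_smul_comm, smul_mul_assoc, smul_mul_assoc, Matrix.trace_smul,
      Complex.real_smul]
    field_simp
  have eD : (∫ t in (0:ℝ)..1, (NormedSpace.exp ((1 - t) • ((-β) • H)) * (β • A) *
          NormedSpace.exp (t • ((-β) • H)) * 1).trace)
      = β * (NormedSpace.exp ((-β) • H) * A).trace := by
    have : ∀ t : ℝ, (NormedSpace.exp ((1 - t) • ((-β) • H)) * (β • A) *
          NormedSpace.exp (t • ((-β) • H)) * 1).trace
          = β * (NormedSpace.exp ((-β) • H) * A).trace := by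
      intro t
      rw [mul_one, Matrix.trace_mul_comm, ← mul_assoc, aux_exp_add, mul_smul_comm,
        Matrix.trace_smul, Complex.real_smul]
      simp
    simp only [this]
    simp
  rw [eN] at hN
  rw [eD] at hD
  simp only [mul_one] at hD
  have hq := hN.div hD (by simpa using hZ)
  have hre := Complex.reCLM.hasFDerivAt.comp_hasDerivAt (0:ℝ) hq
  have hA0 : (gibbsC β H A).im = 0 := by
    rw [← Complex.conj_eq_iff_im]
    unfold gibbsC
    have r1 := aux_real _ A (aux_herm hH (-β)) hA
    have r2 := aux_real _ (1 : Matrix n n ℂ) (aux_herm hH (-β)) Matrix.isHermitian_one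
    rw [mul_one] at r2
    rw [map_div₀]
    simp only [Complex.star_def] at r1 r2
    rw [r1, r2]
  have hf : (fun lam : ℝ => gibbs β (H - lam • A) B) = Complex.reCLM ∘
      ((fun s : ℝ => (NormedSpace.exp ((-β) • H + s • (β • A)) * B).trace) /
        fun s : ℝ => (NormedSpace.exp ((-β) • H + s • (β • A))).trace) := by
    funext lam
    have : (-β) • (H - lam • A) = (-β) • H + lam • (β • A) := by
      rw [smul_sub, smul_smul, smul_smul, sub_eq_add_neg, ← neg_smul]
      congr 2
      ring
    simp [gibbs, gibbsC, this]
  rw [hf]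
  refine hre.congr_deriv ?_
  · have : ((β:ℂ) * (duhamelC β H A B - gibbsC β H A * gibbsC β H B)).re
        = β * (duhamel β H A B - gibbs β H A * gibbs β H B) := by
      rw [Complex.re_ofReal_mul, Complex.sub_re, Complex.mul_re, hA0]
      simp [duhamel, gibbs]
    rw [← this]
    simp only [zero_smul, add_zero, Complex.reCLM_apply]
    congr 1
    unfold gibbsC
    field_simp

theorem stmt2 {n : Type*} [Fintype n] [DecidableEq n] [Nonempty n]
    (β : ℝ) (hβ : 0 < β) (H A B : Matrix n n ℂ)
    (hH : H.IsHermitian) (hA : A.IsHermitian) (hB : B.IsHermitian) :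
    Differentiable ℝ (fun lam : ℝ => gibbs β (H - lam • A) B) ∧
    deriv (fun lam : ℝ => gibbs β (H - lam • A) B) 0
      = β * (duhamel β H A B - gibbs β H A * gibbs β H B) := by
  refine ⟨fun x => ?_, (aux_main β H A B hH hA).deriv⟩
  have h := aux_main β (H - x • A) A B (hH.sub (aux_herm hA x)) hA
  have h' := HasDerivAt.comp_sub_const x x (by simpa using h)
  refine (h'.differentiableAt).congr_of_eventuallyEq ?_
  filter_upwards with y
  congr 1
  rw [sub_smul]
  abel
end
end

section
/- Let H and A be Hermitian matrices of the same finite size and β > 0, and let ⟨·⟩ be the Gibbs expectation of H at inverse temperature β. Then 0 ≤ ⟨A⟩² ≤ ⟨A|A⟩ ≤ ⟨A²⟩, where ⟨A|A⟩ is the Duhamel–Kubo–Bogolyubov product of A with itself. -/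
open Matrix

noncomputable section

theorem aux_exp {n : Type*} [Fintype n] [DecidableEq n] (H : Matrix n n ℂ)
    (hH : H.IsHermitian) :
    ∃ (U V : Matrix n n ℂ) (l : n → ℝ), U * V = 1 ∧ V * U = 1 ∧ Uᴴ = V ∧
      ∀ s : ℝ, NormedSpace.exp (s • H) =
        U * diagonal (fun i => ((Real.exp (s * l i) : ℝ) : ℂ)) * V := by
  have h1 : (hH.eigenvectorUnitary : Matrix n n ℂ) * (star hH.eigenvectorUnitary : Matrix n n ℂ) = 1 := by
    simp
  have h2 : (star hH.eigenvectorUnitary : Matrix n n ℂ) * (hH.eigenvectorUnitary : Matrix n n ℂ) = 1 := by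
    simp
  refine ⟨hH.eigenvectorUnitary, (star hH.eigenvectorUnitary : Matrix n n ℂ), hH.eigenvalues,
    h1, h2, rfl, fun s => ?_⟩
  have hs : s • H = (hH.eigenvectorUnitary : Matrix n n ℂ) *
      diagonal (fun i => ((s * hH.eigenvalues i : ℝ) : ℂ)) *
      (star hH.eigenvectorUnitary : Matrix n n ℂ) := by
    conv_lhs => rw [hH.spectral_theorem]
    rw [Unitary.conjStarAlgAut_apply, ← Matrix.smul_mul, ← Matrix.mul_smul]
    congr 2
    ext i j
    by_cases h : i = j
    · subst h; simp
    · simp [h]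
  rw [hs]
  have := Matrix.exp_units_conj (⟨_, _, h1, h2⟩ : (Matrix n n ℂ)ˣ)
    (diagonal (fun i => ((s * hH.eigenvalues i : ℝ) : ℂ)))
  simp only [Units.val_mk, Units.inv_mk] at this
  refine this.trans ?_
  rw [Matrix.exp_diagonal]
  congr 3
  ext i
  rw [Pi.coe_exp, ← Complex.exp_eq_exp_ℂ, Complex.ofReal_exp]

theorem aux_tr2 {n : Type*} [Fintype n] [DecidableEq n] (B : Matrix n n ℂ)
    (hB : B.IsHermitian) (p q : n → ℝ) :
    (diagonal (fun i => (p i : ℂ)) * B * diagonal (fun i => (q i : ℂ)) * B).trace =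
      ((∑ i, ∑ j, p i * q j * Complex.normSq (B i j) : ℝ) : ℂ) := by
  push_cast
  simp only [Matrix.trace, Matrix.diag]
  refine Finset.sum_congr rfl fun i _ => ?_
  rw [Matrix.mul_apply]
  refine Finset.sum_congr rfl fun j _ => ?_
  rw [Matrix.mul_diagonal, Matrix.diagonal_mul, ← hB.apply j i, Complex.normSq_eq_conj_mul_self]
  simp
  ring

theorem aux_tr1 {n : Type*} [Fintype n] [DecidableEq n] (B : Matrix n n ℂ)
    (hB : B.IsHermitian) (p : n → ℝ) :
    (diagonal (fun i => (p i : ℂ)) * B).trace = ((∑ i, p i * (B i i).re : ℝ) : ℂ) := by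
  push_cast
  simp only [Matrix.trace, Matrix.diag]
  refine Finset.sum_congr rfl fun i _ => ?_
  rw [Matrix.diagonal_mul]
  congr 1
  exact (Complex.conj_eq_iff_re.mp (hB.apply i i)).symm

theorem stmt3 {n : Type*} [Fintype n] [DecidableEq n] [Nonempty n]
    (β : ℝ) (hβ : 0 < β) (H A : Matrix n n ℂ)
    (hH : H.IsHermitian) (hA : A.IsHermitian) :
    0 ≤ (gibbs β H A) ^ 2 ∧ (gibbs β H A) ^ 2 ≤ duhamel β H A A ∧
      duhamel β H A A ≤ gibbs β H (A * A) := by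
  refine ⟨sq_nonneg _, ?_⟩
  obtain ⟨U, V, l, hUV, hVU, hU, hE⟩ := aux_exp H hH
  obtain ⟨B, hBdef⟩ : ∃ B, B = V * A * U := ⟨_, rfl⟩
  have hB : B.IsHermitian := by
    have hV : Vᴴ = U := by rw [← hU, conjTranspose_conjTranspose]
    rw [Matrix.IsHermitian, hBdef, conjTranspose_mul, conjTranspose_mul, hU, hV, hA.eq, mul_assoc]
  have hc : ∀ X : Matrix n n ℂ, V * (U * X) = X := fun X => by
    rw [← mul_assoc, hVU, one_mul]
  have hAB : A = U * B * V := by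
    rw [hBdef]
    have : U * (V * A * U) * V = (U * V) * A * (U * V) := by simp only [mul_assoc]
    rw [this, hUV, one_mul, mul_one]
  have htr : ∀ X : Matrix n n ℂ, (U * (X * V)).trace = X.trace := fun X => by
    rw [Matrix.trace_mul_comm, mul_assoc, hVU, mul_one]
  set p : n → ℝ := fun i => Real.exp (-β * l i) with hp
  have hp0 : ∀ i, 0 < p i := fun i => Real.exp_pos _
  set Z : ℝ := ∑ i, p i with hZ
  have hZ0 : 0 < Z := Finset.sum_pos (fun i _ => hp0 i) Finset.univ_nonempty
  have hZtr : (NormedSpace.exp ((-β) • H)).trace = (Z : ℂ) := by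
    rw [hE, mul_assoc, htr, Matrix.trace_diagonal, hZ, Complex.ofReal_sum]
  have k1 : ∀ d : n → ℝ, (U * diagonal (fun i => (d i : ℂ)) * V * A).trace =
      ((∑ i, d i * (B i i).re : ℝ) : ℂ) := by
    intro d
    rw [← aux_tr1 B hB, hAB]
    refine Eq.trans ?_ (htr _)
    congr 1
    simp only [mul_assoc, hc]
  have k2 : ∀ d e f : n → ℝ, (U * diagonal (fun i => (d i : ℂ)) * V *
      (U * diagonal (fun i => (e i : ℂ)) * V * A *
      (U * diagonal (fun i => (f i : ℂ)) * V) * A)).trace =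
      ((∑ i, ∑ j, (d i * e i) * f j * Complex.normSq (B i j) : ℝ) : ℂ) := by
    intro d e f
    rw [← aux_tr2 B hB (fun i => d i * e i), hAB]
    have : (diagonal (fun i => ((d i * e i : ℝ) : ℂ)) : Matrix n n ℂ) =
        diagonal (fun i => (d i : ℂ)) * diagonal (fun i => (e i : ℂ)) := by
      rw [diagonal_mul_diagonal]
      push_cast
      rfl
    rw [this]
    refine Eq.trans ?_ (htr _)
    congr 1
    simp only [mul_assoc, hc]
  have k3 : ∀ d : n → ℝ, (U * diagonal (fun i => (d i : ℂ)) * V * (A * A)).trace =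
      ((∑ i, ∑ j, d i * Complex.normSq (B i j) : ℝ) : ℂ) := by
    intro d
    have := k2 d (fun _ => 1) (fun _ => 1)
    simpa [hUV] using this
  have g1 : gibbs β H A = (∑ i, p i * (B i i).re) / Z := by
    rw [gibbs, gibbsC, hZtr, hE, k1, ← Complex.ofReal_div, Complex.ofReal_re]
  have g2 : gibbs β H (A * A) = (∑ i, ∑ j, p i * Complex.normSq (B i j)) / Z := by
    rw [gibbs, gibbsC, hZtr, hE, k3, ← Complex.ofReal_div, Complex.ofReal_re]
  have g3 : duhamel β H A A = ∫ t in (0:ℝ)..1,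
      (∑ i, ∑ j, (Real.exp (-β * l i) * Real.exp (t * β * l i)) * Real.exp (-(t * β) * l j) *
        Complex.normSq (B i j)) / Z := by
    rw [duhamel, duhamelC, ← Complex.ofReal_re (∫ t in (0:ℝ)..1, _), ← intervalIntegral.integral_ofReal]
    congr 1
    refine intervalIntegral.integral_congr fun t _ => ?_
    simp only [gibbsC]
    rw [hZtr, hA.eq, hE, hE, hE, k2, ← Complex.ofReal_div]
  have hint : IntervalIntegrable (fun t : ℝ => (∑ i, ∑ j, (Real.exp (-β * l i) *
      Real.exp (t * β * l i)) * Real.exp (-(t * β) * l j) *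
        Complex.normSq (B i j)) / Z) MeasureTheory.volume 0 1 := by
    apply Continuous.intervalIntegrable
    fun_prop
  rw [g1, g2, g3]
  constructor
  · have hconst : ((∑ i, p i * (B i i).re) / Z) ^ 2 =
        ∫ t in (0:ℝ)..1, ((∑ i, p i * (B i i).re) / Z) ^ 2 := by
      rw [intervalIntegral.integral_const, sub_zero, one_smul]
    rw [hconst]
    refine intervalIntegral.integral_mono_on zero_le_one intervalIntegrable_const hint fun t _ => ?_
    have hcs : (∑ i, p i * (B i i).re) ^ 2 ≤ Z * ∑ i, p i * (B i i).re ^ 2 :=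
      Finset.sum_sq_le_sum_mul_sum_of_sq_le_mul _ (fun i _ => (hp0 i).le)
        (fun i _ => mul_nonneg (hp0 i).le (sq_nonneg _)) (fun i _ => le_of_eq (by ring))
    have hd : ∑ i, p i * (B i i).re ^ 2 ≤ ∑ i, ∑ j, (Real.exp (-β * l i) *
        Real.exp (t * β * l i)) * Real.exp (-(t * β) * l j) * Complex.normSq (B i j) := by
      refine Finset.sum_le_sum fun i _ => ?_
      refine le_trans ?_ (Finset.single_le_sum (fun j _ => ?_) (Finset.mem_univ i))
      · have : Real.exp (-β * l i) * Real.exp (t * β * l i) * Real.exp (-(t * β) * l i) = p i := by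
          rw [← Real.exp_add, ← Real.exp_add, hp]
          congr 1
          ring
        rw [this]
        refine mul_le_mul_of_nonneg_left ?_ (hp0 i).le
        rw [Complex.normSq_apply]
        nlinarith [mul_self_nonneg (B i i).im]
      · have := Complex.normSq_nonneg (B i j)
        positivity
    rw [div_pow, div_le_div_iff₀ (pow_pos hZ0 2) hZ0]
    calc _ ≤ (Z * ∑ i, p i * (B i i).re ^ 2) * Z := mul_le_mul_of_nonneg_right hcs hZ0.le
      _ = (∑ i, p i * (B i i).re ^ 2) * Z ^ 2 := by ring
      _ ≤ _ := mul_le_mul_of_nonneg_right hd (sq_nonneg Z)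
  · have hconst : (∑ i, ∑ j, p i * Complex.normSq (B i j)) / Z =
        ∫ t in (0:ℝ)..1, (∑ i, ∑ j, p i * Complex.normSq (B i j)) / Z := by
      rw [intervalIntegral.integral_const, sub_zero, one_smul]
    rw [hconst]
    refine intervalIntegral.integral_mono_on zero_le_one hint intervalIntegrable_const fun t ht => ?_
    refine div_le_div_of_nonneg_right ?_ hZ0.le
    have hsymm : ∑ i, ∑ j, p j * Complex.normSq (B i j) =
        ∑ i, ∑ j, p i * Complex.normSq (B i j) := by
      rw [Finset.sum_comm]
      refine Finset.sum_congr rfl fun i _ => Finset.sum_congr rfl fun j _ => ?_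
      rw [← hB.apply j i]
      simp
    calc _ ≤ ∑ i, ∑ j, ((1 - t) * p i + t * p j) * Complex.normSq (B i j) := by
          refine Finset.sum_le_sum fun i _ => Finset.sum_le_sum fun j _ => ?_
          refine mul_le_mul_of_nonneg_right ?_ (Complex.normSq_nonneg _)
          have := convexOn_exp.2 (Set.mem_univ (-β * l i)) (Set.mem_univ (-β * l j))
            (sub_nonneg.2 ht.2) ht.1 (by ring)
          simp only [smul_eq_mul] at this
          refine le_trans (le_of_eq ?_) this
          rw [← Real.exp_add, ← Real.exp_add]
          congr 1
          ring
      _ = (1 - t) * (∑ i, ∑ j, p i * Complex.normSq (B i j)) +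
          t * ∑ i, ∑ j, p j * Complex.normSq (B i j) := by
          simp only [Finset.mul_sum, ← Finset.sum_add_distrib]
          refine Finset.sum_congr rfl fun i _ => Finset.sum_congr rfl fun j _ => ?_
          ring
      _ = _ := by rw [hsymm]; ring
end
end

section
/- (Falk–Bruch inequality) Let H and A be Hermitian matrices of the same finite size with A ≠ 0, let β > 0, and let ⟨·⟩ be the Gibbs expectation of H at inverse temperature β. Then ⟨A²⟩ > 0, the Gibbs expectation of the double commutator ⟨[A,[βH,A]]⟩ is a non-negative real number, and ⟨A|A⟩ ≥ ⟨A²⟩ · Φ( ⟨[A,[βH,A]]⟩ / (4⟨A²⟩) ), where ⟨A|A⟩ is the Duhamel–Kubo–Bogolyubov product of A with itself. -/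
open Matrix

noncomputable section

lemma tanh_hasDeriv (r : ℝ) : HasDerivAt Real.tanh (1 / (Real.cosh r)^2) r := by
  have h := (Real.hasDerivAt_sinh r).div (Real.hasDerivAt_cosh r) (Real.cosh_pos r).ne'
  have e : Real.tanh = Real.sinh / Real.cosh := by
    funext x; exact Real.tanh_eq_sinh_div_cosh x
  rw [e]
  refine h.congr_deriv ?_
  have := Real.cosh_sq r
  congr 1
  linarith

/-- basic inequality sinh r ≥ r -/
lemma le_sinh {r : ℝ} (h : 0 ≤ r) : r ≤ Real.sinh r := Real.self_le_sinh_iff.2 h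

lemma tanh_le_self' {r : ℝ} (h : 0 ≤ r) : Real.tanh r ≤ r := by
  have hm : MonotoneOn (fun x => x - Real.tanh x) (Set.Ici 0) := by
    apply monotoneOn_of_hasDerivWithinAt_nonneg (convex_Ici 0)
      (f' := fun x => 1 - 1 / (Real.cosh x)^2)
    · intro x _
      exact ((hasDerivAt_id' x).sub (tanh_hasDeriv x)).continuousAt.continuousWithinAt
    · intro x _
      exact ((hasDerivAt_id' x).sub (tanh_hasDeriv x)).hasDerivWithinAt
    · intro x _
      have := Real.one_le_cosh x
      have h2 : 1 / (Real.cosh x)^2 ≤ 1 := by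
        rw [div_le_one (by positivity)]; nlinarith
      linarith
  have := hm (Set.mem_Ici.2 le_rfl) (Set.mem_Ici.2 h) h
  simp at this
  exact this

lemma tanh_nn {r : ℝ} (h : 0 ≤ r) : 0 ≤ Real.tanh r := by
  rw [Real.tanh_eq_sinh_div_cosh]
  exact div_nonneg (Real.sinh_nonneg_iff.2 h) (Real.cosh_pos r).le

lemma tanh_ps {r : ℝ} (h : 0 < r) : 0 < Real.tanh r := by
  rw [Real.tanh_eq_sinh_div_cosh]
  exact div_pos (Real.sinh_pos_iff.2 h) (Real.cosh_pos r)

lemma key1 {r : ℝ} (h : 0 ≤ r) :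
    0 ≤ 2 * Real.sinh r * Real.cosh r + Real.tanh r + r / (Real.cosh r)^2 - 4 * r := by
  have hd : ∀ x, HasDerivAt (fun r => 2 * Real.sinh r * Real.cosh r + Real.tanh r + r / (Real.cosh r)^2 - 4 * r)
      (4 * (Real.cosh x)^2 - 6 + 2 / (Real.cosh x)^2 - 2 * x * Real.tanh x / (Real.cosh x)^2) x := by
    intro x
    have hc := (Real.cosh_pos x).ne'
    have h1 := ((((Real.hasDerivAt_sinh x).const_mul 2).mul (Real.hasDerivAt_cosh x)).add
      (tanh_hasDeriv x)).add ((hasDerivAt_id' x).div ((Real.hasDerivAt_cosh x).pow 2) (pow_ne_zero 2 hc))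
    have h2 := h1.sub ((hasDerivAt_id' x).const_mul 4)
    refine h2.congr_deriv ?_
    rw [Real.tanh_eq_sinh_div_cosh]
    have := Real.sinh_sq x
    simp
    field_simp
    rw [show (4:ℝ) = 2 + 2 by norm_num]
    ring_nf
    have e2 : Real.sinh x ^ 2 = Real.cosh x ^2 - 1 := this
    simp only [e2]
    ring
  have hm : MonotoneOn (fun r => 2 * Real.sinh r * Real.cosh r + Real.tanh r + r / (Real.cosh r)^2 - 4 * r) (Set.Ici 0) := by
    apply monotoneOn_of_hasDerivWithinAt_nonneg (convex_Ici 0)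
      (fun x _ => (hd x).continuousAt.continuousWithinAt) (fun x _ => (hd x).hasDerivWithinAt)
    intro x hx
    simp at hx
    have hc := Real.cosh_pos x
    have e : 4 * (Real.cosh x)^2 - 6 + 2 / (Real.cosh x)^2 - 2 * x * Real.tanh x / (Real.cosh x)^2
      = 2 / (Real.cosh x)^2 * ((2 * Real.cosh x ^2 - 1) * (Real.cosh x ^ 2 - 1) - x * Real.tanh x) := by
      field_simp; ring
    rw [e]
    apply mul_nonneg (by positivity)
    have h1 := tanh_le_self' hx.le
    have h2 := le_sinh hx.le
    have h3 := Real.one_le_cosh x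
    have h4 := Real.cosh_sq x
    have h5 : x * Real.tanh x ≤ Real.sinh x ^2 := by nlinarith
    have h6 : Real.sinh x ^2 ≤ (2 * Real.cosh x ^2 - 1) * (Real.cosh x ^ 2 - 1) := by
      rw [show Real.cosh x ^2 - 1 = Real.sinh x ^2 by linarith]
      nlinarith [sq_nonneg (Real.sinh x)]
    linarith
  have := hm (Set.mem_Ici.2 le_rfl) (Set.mem_Ici.2 h) h
  simpa using this

lemma key2 {r : ℝ} (h : 0 ≤ r) :
    2 * r^2 ≤ Real.sinh r ^ 2 + r * Real.tanh r := by
  have hd : ∀ x, HasDerivAt (fun r => Real.sinh r ^ 2 + r * Real.tanh r - 2 * r^2)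
      (2 * Real.sinh x * Real.cosh x + Real.tanh x + x / (Real.cosh x)^2 - 4 * x) x := by
    intro x
    have h1 := (((Real.hasDerivAt_sinh x).pow 2).add ((hasDerivAt_id' x).mul (tanh_hasDeriv x))).sub
      (((hasDerivAt_id' x).pow 2).const_mul 2)
    refine h1.congr_deriv ?_
    simp
    ring
  have hm : MonotoneOn (fun r => Real.sinh r ^ 2 + r * Real.tanh r - 2 * r^2) (Set.Ici 0) := by
    apply monotoneOn_of_hasDerivWithinAt_nonneg (convex_Ici 0)
      (fun x _ => (hd x).continuousAt.continuousWithinAt) (fun x _ => (hd x).hasDerivWithinAt)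
    intro x hx
    simp at hx
    exact key1 hx.le
  have := hm (Set.mem_Ici.2 le_rfl) (Set.mem_Ici.2 h) h
  simp at this
  linarith

/-- minus the slope of Φ at `r tanh r`. -/
def slp (r : ℝ) : ℝ := (Real.sinh r * Real.cosh r - r) / (r^2 * (Real.sinh r * Real.cosh r + r))

lemma slp_anti : AntitoneOn slp (Set.Ioi 0) := by
  have hd : ∀ x ∈ Set.Ioi (0:ℝ), HasDerivAt slp
      ((2 * Real.sinh x ^2 * (x^2 * (Real.sinh x * Real.cosh x + x)) - (Real.sinh x * Real.cosh x - x) *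
        (2 * x * (Real.sinh x * Real.cosh x + x) + x^2 * (2 * Real.cosh x ^2)))
        / (x^2 * (Real.sinh x * Real.cosh x + x))^2) x := by
    intro x hx
    have hx : 0 < x := hx
    have hs := Real.sinh_pos_iff.2 hx
    have hc := Real.cosh_pos x
    have h0 := (Real.hasDerivAt_sinh x).mul (Real.hasDerivAt_cosh x)
    have h1 := (h0.sub (hasDerivAt_id' x)).div
      (((hasDerivAt_id' x).pow 2).mul (h0.add (hasDerivAt_id' x))) (show x^2 * (Real.sinh x * Real.cosh x + x) ≠ 0 by positivity)
    refine h1.congr_deriv ?_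
    have := Real.cosh_sq x
    simp
    congr 1
    have e2 : Real.cosh x * Real.cosh x = Real.sinh x ^2 + 1 := by rw [← this]; ring
    rw [e2, this]
    ring
  apply antitoneOn_of_hasDerivWithinAt_nonpos (convex_Ioi 0)
      (fun x hx => (hd x hx).continuousAt.continuousWithinAt)
      (fun x hx => (hd x (interior_subset hx)).hasDerivWithinAt)
  intro x hx
  simp at hx
  apply div_nonpos_of_nonpos_of_nonneg _ (by positivity)
  have k := key2 hx.le
  have hs := Real.sinh_pos_iff.2 hx
  have hc := Real.cosh_pos x
  have h4 := Real.cosh_sq x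
  rw [Real.tanh_eq_sinh_div_cosh] at k
  have k2 : 2 * x^2 * Real.cosh x ^ 2 ≤ Real.sinh x ^2 * Real.cosh x ^2 + x * Real.sinh x * Real.cosh x := by
    have := mul_le_mul_of_nonneg_right k (sq_nonneg (Real.cosh x))
    refine this.trans (le_of_eq ?_)
    field_simp
  have : (2 * Real.sinh x ^2 * (x^2 * (Real.sinh x * Real.cosh x + x)) - (Real.sinh x * Real.cosh x - x) *
        (2 * x * (Real.sinh x * Real.cosh x + x) + x^2 * (2 * Real.cosh x ^2)))
      = 2 * x * (2 * x^2 * Real.cosh x ^ 2 - (Real.sinh x ^2 * Real.cosh x ^2 + x * Real.sinh x * Real.cosh x)) := by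
    have e4 : Real.sinh x ^2 = Real.cosh x ^2 - 1 := by linarith
    ring_nf
    simp only [show Real.sinh x ^ 3 = Real.sinh x * Real.sinh x ^2 by ring, e4]
    ring
  rw [this]
  apply mul_nonpos_of_nonneg_of_nonpos (by positivity)
  linarith

lemma sc_ge {r : ℝ} (h : 0 ≤ r) : r ≤ Real.sinh r * Real.cosh r := by
  have h2 := le_sinh h
  have h3 := Real.one_le_cosh r
  nlinarith

def Lf (r : ℝ) : ℝ := if r = 0 then 1 else Real.tanh r / r

lemma F_deriv (σ : ℝ) {x : ℝ} (hx : 0 < x) :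
    HasDerivAt (fun r => Real.tanh r / r + σ * (r * Real.tanh r))
      ((Real.sinh x * Real.cosh x + x) / Real.cosh x ^2 * (σ - slp x)) x := by
  have hs := Real.sinh_pos_iff.2 hx
  have hc := Real.cosh_pos x
  have h1 := ((tanh_hasDeriv x).div (hasDerivAt_id' x) hx.ne').add
    (((hasDerivAt_id' x).mul (tanh_hasDeriv x)).const_mul σ)
  refine h1.congr_deriv ?_
  rw [Real.tanh_eq_sinh_div_cosh, slp]
  have : Real.sinh x * Real.cosh x + x ≠ 0 := by positivity
  field_simp
  ring

lemma tangent_pos {r₀ : ℝ} (h0 : 0 < r₀) {r : ℝ} (hr : 0 < r) :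
    Real.tanh r₀ / r₀ + slp r₀ * (r₀ * Real.tanh r₀) ≤
    Real.tanh r / r + slp r₀ * (r * Real.tanh r) := by
  rcases le_total r r₀ with h | h
  · have : AntitoneOn (fun r => Real.tanh r / r + slp r₀ * (r * Real.tanh r)) (Set.Icc r r₀) := by
      apply antitoneOn_of_hasDerivWithinAt_nonpos (convex_Icc _ _)
        (fun x hx => (F_deriv _ (hr.trans_le hx.1)).continuousAt.continuousWithinAt)
        (fun x hx => (F_deriv _ (hr.trans_le (interior_subset hx).1)).hasDerivWithinAt)
      intro x hx
      have hx := interior_subset hx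
      have xp : 0 < x := hr.trans_le hx.1
      have hs := Real.sinh_pos_iff.2 xp
      have hc := Real.cosh_pos x
      apply mul_nonpos_of_nonneg_of_nonpos (by positivity)
      have := slp_anti xp h0 hx.2
      linarith
    exact this (Set.left_mem_Icc.2 h) (Set.right_mem_Icc.2 h) h
  · have : MonotoneOn (fun r => Real.tanh r / r + slp r₀ * (r * Real.tanh r)) (Set.Icc r₀ r) := by
      apply monotoneOn_of_hasDerivWithinAt_nonneg (convex_Icc _ _)
        (fun x hx => (F_deriv _ (h0.trans_le hx.1)).continuousAt.continuousWithinAt)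
        (fun x hx => (F_deriv _ (h0.trans_le (interior_subset hx).1)).hasDerivWithinAt)
      intro x hx
      have hx := interior_subset hx
      have xp : 0 < x := h0.trans_le hx.1
      have hs := Real.sinh_pos_iff.2 xp
      have hc := Real.cosh_pos x
      apply mul_nonneg (by positivity)
      have := slp_anti h0 xp hx.1
      linarith
    exact this (Set.left_mem_Icc.2 h) (Set.right_mem_Icc.2 h) h

lemma slp_nonneg {r : ℝ} (h : 0 < r) : 0 ≤ slp r := by
  have hs := Real.sinh_pos_iff.2 h
  have hc := Real.cosh_pos r
  apply div_nonneg _ (by positivity)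
  linarith [sc_ge h.le]

lemma Lf_neg (r : ℝ) : Lf (-r) = Lf r := by
  simp [Lf, Real.tanh_neg]

lemma tangent_all (r₀ : ℝ) (h0 : 0 ≤ r₀) : ∃ σ : ℝ, ∀ r : ℝ,
    Lf r₀ + σ * (r₀ * Real.tanh r₀) ≤ Lf r + σ * (r * Real.tanh r) := by
  suffices ∃ σ : ℝ, ∀ r : ℝ, 0 ≤ r → 
    Lf r₀ + σ * (r₀ * Real.tanh r₀) ≤ Lf r + σ * (r * Real.tanh r) by
    obtain ⟨σ, h⟩ := this
    refine ⟨σ, fun r => ?_⟩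
    rcases le_total 0 r with hr | hr
    · exact h r hr
    · have := h (-r) (by linarith)
      rw [Lf_neg, Real.tanh_neg] at this
      linarith [this, neg_mul_neg r (Real.tanh r), congrArg (σ * ·) (neg_mul_neg r (Real.tanh r))]
  rcases h0.eq_or_lt with rfl | h0
  · refine ⟨1, fun r hr => ?_⟩
    rcases hr.eq_or_lt with rfl | hr
    · simp
    · rw [Lf, if_pos rfl, Lf, if_neg hr.ne']
      have h1 := tanh_le_self' hr.le
      have h2 := tanh_ps hr
      have hc := Real.cosh_pos r
      have h3 : 1 - Real.tanh r ^2 ≤ Real.tanh r / r := by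
        have e : 1 - Real.tanh r ^2 = 1 / Real.cosh r ^2 := by
          rw [Real.tanh_eq_sinh_div_cosh]
          field_simp
          linarith [Real.cosh_sq r]
        rw [e, Real.tanh_eq_sinh_div_cosh, div_div, div_le_div_iff₀ (by positivity) (by positivity)]
        nlinarith [sc_ge hr.le]
      simp
      nlinarith
  · refine ⟨slp r₀, fun r hr => ?_⟩
    rcases hr.eq_or_lt with rfl | hr
    · simp only [Lf, if_neg h0.ne', if_pos, zero_mul, mul_zero, add_zero]
      have hlim : Filter.Tendsto (fun r : ℝ => 1 + slp r₀ * (r * r)) (nhdsWithin 0 (Set.Ioi 0)) (nhds (1 + slp r₀ * (0 * 0))) := by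
        apply Filter.Tendsto.mono_left _ nhdsWithin_le_nhds
        exact Continuous.tendsto (by fun_prop) 0
      simp only [mul_zero, add_zero] at hlim
      apply ge_of_tendsto hlim
      filter_upwards [self_mem_nhdsWithin] with r hr
      have hr : 0 < r := hr
      refine (tangent_pos h0 hr).trans ?_
      have h1 := tanh_le_self' hr.le
      have := slp_nonneg h0
      gcongr
      rwa [div_le_one hr]
    · rw [Lf, if_neg h0.ne', Lf, if_neg hr.ne']
      exact tangent_pos h0 hr

lemma exists_r (y : ℝ) (hy : 0 ≤ y) : ∃ r : ℝ, 0 ≤ r ∧ r * Real.tanh r = y := by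
  have t1 : 0 < Real.tanh 1 := tanh_ps one_pos
  have hc : ∀ s, ContinuousOn (fun r => r * Real.tanh r) s := fun s x _ =>
    ((hasDerivAt_id' x).mul (tanh_hasDeriv x)).continuousAt.continuousWithinAt
  have hR : (0:ℝ) ≤ 1 + y / Real.tanh 1 := by positivity
  have := intermediate_value_Icc hR (hc _)
  obtain ⟨r, hr, e⟩ := this (show y ∈ _ by
    constructor
    · simpa using hy
    · have : Real.tanh 1 ≤ Real.tanh (1 + y / Real.tanh 1) := by
        have hm : Monotone Real.tanh := monotone_of_hasDerivAt_nonneg (fun x => tanh_hasDeriv x)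
          (fun x => by positivity)
        exact hm (by linarith [show 0 ≤ y / Real.tanh 1 by positivity])
      calc y = y / Real.tanh 1 * Real.tanh 1 := by field_simp
        _ ≤ _ := by
          apply mul_le_mul _ this t1.le hR
          linarith)
  exact ⟨r, hr.1, e⟩

lemma Phi_eq (Φ : ℝ → ℝ) (hΦ : ∀ r : ℝ, 0 < r → Φ (r * Real.tanh r) = Real.tanh r / r)
    (hΦ0 : Φ 0 = 1) {r : ℝ} (h : 0 ≤ r) : Φ (r * Real.tanh r) = Lf r := by
  rcases h.eq_or_lt with rfl | h
  · simp [Lf, hΦ0]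
  · rw [hΦ r h, Lf, if_neg h.ne']

lemma jensen {ι : Type*} (s : Finset ι) (m r : ι → ℝ) (hm : ∀ i ∈ s, 0 ≤ m i) (hp : 0 < ∑ i ∈ s, m i)
    (Φ : ℝ → ℝ) (hΦ : ∀ r : ℝ, 0 < r → Φ (r * Real.tanh r) = Real.tanh r / r)
    (hΦ0 : Φ 0 = 1) :
    (∑ i ∈ s, m i) * Φ ((∑ i ∈ s, m i * (r i * Real.tanh (r i))) / ∑ i ∈ s, m i) ≤
      ∑ i ∈ s, m i * Lf (r i) := by
  set b := ∑ i ∈ s, m i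
  set c := ∑ i ∈ s, m i * (r i * Real.tanh (r i)) with hcd
  have hc : 0 ≤ c := by
    apply Finset.sum_nonneg
    intro i hi
    apply mul_nonneg (hm i hi)
    rcases le_total 0 (r i) with h | h
    · exact mul_nonneg h (tanh_nn h)
    · have := tanh_nn (r := - r i) (by linarith)
      rw [Real.tanh_neg] at this
      nlinarith
  obtain ⟨r₀, h0, e⟩ := exists_r (c / b) (by positivity)
  rw [← e, Phi_eq Φ hΦ hΦ0 h0]
  obtain ⟨σ, hσ⟩ := tangent_all r₀ h0
  have : ∑ i ∈ s, m i * (Lf r₀ + σ * (r₀ * Real.tanh r₀)) ≤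
      ∑ i ∈ s, m i * (Lf (r i) + σ * (r i * Real.tanh (r i))) :=
    Finset.sum_le_sum fun i hi => mul_le_mul_of_nonneg_left (hσ _) (hm i hi)
  rw [← Finset.sum_mul, e] at this
  simp only [mul_add, Finset.sum_add_distrib] at this
  have e2 : ∑ i ∈ s, m i * (σ * (r i * Real.tanh (r i))) = σ * c := by
    rw [hcd, Finset.mul_sum]
    exact Finset.sum_congr rfl fun i _ => by ring
  rw [e2] at this
  have e3 : b * (σ * (c / b)) = σ * c := by field_simp
  change b * Lf r₀ + b * (σ * (c / b)) ≤ _ at this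
  linarith

lemma term_eq (d : ℝ) : ∫ t in (0:ℝ)..1, Real.exp (t * d) = (1 + Real.exp d) / 2 * Lf (d / 2) := by
  by_cases h : d = 0
  · subst h; simp [Lf]
  · have : ∫ t in (0:ℝ)..1, Real.exp (t * d) = (Real.exp d - 1) / d := by
      rw [intervalIntegral.integral_comp_mul_right (fun x => Real.exp x) h]
      simp; field_simp
    rw [this, Lf, if_neg (by simpa using h), Real.tanh_eq_sinh_div_cosh, Real.sinh_eq, Real.cosh_eq]
    have e : Real.exp d = Real.exp (d/2) * Real.exp (d/2) := by rw [← Real.exp_add]; ring_nf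
    rw [e, Real.exp_neg]
    have := Real.exp_pos (d/2)
    field_simp
    ring

lemma tanh_term (d : ℝ) : (1 + Real.exp d) * Real.tanh (d / 2) = Real.exp d - 1 := by
    rw [Real.tanh_eq_sinh_div_cosh, Real.sinh_eq, Real.cosh_eq]
    have e : Real.exp d = Real.exp (d/2) * Real.exp (d/2) := by rw [← Real.exp_add]; ring_nf
    rw [e, Real.exp_neg]
    have := Real.exp_pos (d/2)
    field_simp
    ring

open Matrix

lemma gibbsC_conj {n : Type*} [Fintype n] [DecidableEq n] (β : ℝ) (U D X : Matrix n n ℂ)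
    (hU : IsUnit U) : gibbsC β (U * D * U⁻¹) (U * X * U⁻¹) = gibbsC β D X := by
  have hd : IsUnit U.det := (Matrix.isUnit_iff_isUnit_det U).1 hU
  have e : (-β) • (U * D * U⁻¹) = U * ((-β) • D) * U⁻¹ := by simp
  have c : U * NormedSpace.exp ((-β) • D) * U⁻¹ * (U * X * U⁻¹) =
      U * (NormedSpace.exp ((-β) • D) * X) * U⁻¹ := by
    simp only [Matrix.mul_assoc, Matrix.nonsing_inv_mul_cancel_left _ _ hd]
  have t : ∀ Y : Matrix n n ℂ, (U * Y * U⁻¹).trace = Y.trace := by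
    intro Y
    rw [Matrix.trace_mul_comm, Matrix.nonsing_inv_mul_cancel_left _ _ hd]
  rw [gibbsC, gibbsC, e, Matrix.exp_conj _ _ hU, c, t, t]

lemma exp_diag {n : Type*} [Fintype n] [DecidableEq n] (t : ℝ) (d : n → ℝ) :
    NormedSpace.exp (t • (diagonal (fun i => (d i : ℂ)) : Matrix n n ℂ)) =
      diagonal (fun i => ((Real.exp (t * d i) : ℝ) : ℂ)) := by
  rw [← Matrix.diagonal_smul, Matrix.exp_diagonal]
  congr 1
  funext i
  rw [Pi.coe_exp]
  simp [← Complex.exp_eq_exp_ℂ]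

lemma trace_diag {n : Type*} [Fintype n] [DecidableEq n] (p q u : n → ℝ) (A : Matrix n n ℂ)
    (hA : A.IsHermitian) :
    (diagonal (fun i => (p i : ℂ)) * A * diagonal (fun i => (q i : ℂ)) * A).trace =
    ((∑ i, ∑ j, p i * q j * ‖A i j‖^2 : ℝ) : ℂ) := by
  simp only [Matrix.trace, Matrix.diag]
  simp only [Matrix.mul_apply (N := A) (M := _ * diagonal _), Matrix.mul_diagonal, Matrix.diagonal_mul]
  push_cast
  refine Finset.sum_congr rfl fun i _ => Finset.sum_congr rfl fun j _ => ?_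
  rw [← hA.apply j i, ← Complex.mul_conj']
  simp; ring

section
variable {n : Type*} [Fintype n] [DecidableEq n]

lemma g_AA (β : ℝ) (d : n → ℝ) (A : Matrix n n ℂ) (hA : A.IsHermitian) :
    gibbsC β (diagonal (fun i => (d i : ℂ))) (A * A) =
     (((∑ i, ∑ j, Real.exp (-β * d i) * ‖A i j‖^2) / ∑ i, Real.exp (-β * d i) : ℝ) : ℂ) := by
  have := trace_diag (fun i => Real.exp (-β * d i)) (fun _ => 1) (fun _ => 1) A hA
  simp only [Complex.ofReal_one, Matrix.diagonal_one, Matrix.mul_one, mul_one] at this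
  rw [gibbsC, exp_diag, ← Matrix.mul_assoc, this, Matrix.trace_diagonal]
  push_cast; rfl

lemma g_comm (β : ℝ) (d : n → ℝ) (A : Matrix n n ℂ) (hA : A.IsHermitian) :
    gibbsC β (diagonal (fun i => (d i : ℂ))) ⁅A, ⁅β • (diagonal (fun i => (d i : ℂ)) : Matrix n n ℂ), A⁆⁆ =
     (((∑ i, ∑ j, Real.exp (-β * d i) * (2 * (β * d j - β * d i)) * ‖A i j‖^2)
       / ∑ i, Real.exp (-β * d i) : ℝ) : ℂ) := by
  have eK : β • (diagonal (fun i => (d i : ℂ)) : Matrix n n ℂ) = diagonal (fun i => ((β * d i : ℝ) : ℂ)) := by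
    rw [← Matrix.diagonal_smul]; congr 1; funext i; simp
  have h1 := trace_diag (fun i => Real.exp (-β * d i)) (fun i => β * d i) (fun _ => 1) A hA
  have h2 := trace_diag (fun i => Real.exp (-β * d i) * (β * d i)) (fun i => 1) (fun _ => 1) A hA
  simp only [Complex.ofReal_one, Matrix.diagonal_one, Matrix.mul_one, mul_one] at h2
  rw [gibbsC, exp_diag, eK, Matrix.trace_diagonal]
  set K : Matrix n n ℂ := diagonal (fun i => ((β * d i : ℝ) : ℂ)) with hK
  set P : Matrix n n ℂ := diagonal (fun i => ((Real.exp (-β * d i) : ℝ) : ℂ)) with hP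
  have ePK : P * K = diagonal (fun i => ((Real.exp (-β * d i) * (β * d i) : ℝ) : ℂ)) := by
    rw [hP, hK, Matrix.diagonal_mul_diagonal]; simp
  have eKP : K * P = P * K := by
    rw [hP, hK, Matrix.diagonal_mul_diagonal, Matrix.diagonal_mul_diagonal]; simp [mul_comm]
  rw [← ePK] at h2
  have e : (P * ⁅A, ⁅K, A⁆⁆).trace = 2 * (P * A * K * A).trace - 2 * (P * K * A * A).trace := by
    have : P * ⁅A, ⁅K, A⁆⁆ = P * A * K * A + P * A * K * A - P * A * A * K - P * K * A * A := by
      simp only [Ring.lie_def]; noncomm_ring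
    rw [this, Matrix.trace_sub, Matrix.trace_sub, Matrix.trace_add, Matrix.trace_mul_comm (P * A * A) K]
    rw [← Matrix.mul_assoc, ← Matrix.mul_assoc, eKP]
    ring
  rw [e, h1, h2, ← Complex.ofReal_sum, ← Complex.ofReal_ofNat, ← Complex.ofReal_mul, ← Complex.ofReal_mul,
    ← Complex.ofReal_sub, ← Complex.ofReal_div]
  congr 2
  rw [Finset.mul_sum, Finset.mul_sum, ← Finset.sum_sub_distrib]
  refine Finset.sum_congr rfl fun i _ => ?_
  rw [Finset.mul_sum, Finset.mul_sum, ← Finset.sum_sub_distrib]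
  refine Finset.sum_congr rfl fun j _ => ?_
  ring

lemma g_duh (β : ℝ) (d : n → ℝ) (A : Matrix n n ℂ) (hA : A.IsHermitian) :
    duhamel β (diagonal (fun i => (d i : ℂ))) A A =
     (∑ i, ∑ j, Real.exp (-β * d i) * ‖A i j‖^2 *
       ((1 + Real.exp (β * d i - β * d j)) / 2 * Lf ((β * d i - β * d j) / 2)))
       / ∑ i, Real.exp (-β * d i) := by
  have hint : ∀ t : ℝ, gibbsC β (diagonal (fun i => (d i : ℂ)))
      (NormedSpace.exp ((t * β) • (diagonal (fun i => (d i : ℂ)) : Matrix n n ℂ)) * Aᴴ *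
      NormedSpace.exp ((-(t * β)) • (diagonal (fun i => (d i : ℂ)) : Matrix n n ℂ)) * A) =
      (((∑ i, ∑ j, Real.exp (-β * d i) * ‖A i j‖^2 * Real.exp (t * (β * d i - β * d j)))
       / ∑ i, Real.exp (-β * d i) : ℝ) : ℂ) := by
    intro t
    have h1 := trace_diag (fun i => Real.exp (-β * d i) * Real.exp (t * β * d i))
      (fun i => Real.exp (-(t * β) * d i)) (fun _ => 1) A hA
    rw [gibbsC, exp_diag, exp_diag, exp_diag, hA.eq, Matrix.trace_diagonal, ← Complex.ofReal_sum,
      ← Matrix.mul_assoc, ← Matrix.mul_assoc, ← Matrix.mul_assoc, Matrix.diagonal_mul_diagonal]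
    simp only [← Complex.ofReal_mul]
    rw [h1, ← Complex.ofReal_div]
    congr 2
    refine Finset.sum_congr rfl fun i _ => Finset.sum_congr rfl fun j _ => ?_
    rw [show t * (β * d i - β * d j) = t * β * d i + -(t * β) * d j by ring, Real.exp_add]
    ring
  rw [duhamel, duhamelC]
  simp only [hint]
  rw [intervalIntegral.integral_ofReal, Complex.ofReal_re, intervalIntegral.integral_div]
  congr 1
  rw [intervalIntegral.integral_finsetSum]
  · refine Finset.sum_congr rfl fun i _ => ?_
    rw [intervalIntegral.integral_finsetSum]
    · refine Finset.sum_congr rfl fun j _ => ?_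
      rw [intervalIntegral.integral_const_mul, term_eq]
    · intro j _
      exact Continuous.intervalIntegrable (by fun_prop) _ _
  · intro j _
    exact Continuous.intervalIntegrable (by fun_prop) _ _

lemma main_diag [Nonempty n]
    (β : ℝ) (d : n → ℝ) (A : Matrix n n ℂ)
    (hA : A.IsHermitian) (hA0 : A ≠ 0)
    (Φ : ℝ → ℝ) (hΦ : ∀ r : ℝ, 0 < r → Φ (r * Real.tanh r) = Real.tanh r / r)
    (hΦ0 : Φ 0 = 1) (H : Matrix n n ℂ) (hH : H = diagonal (fun i => (d i : ℂ))) :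
    0 < gibbs β H (A * A) ∧
    (gibbsC β H ⁅A, ⁅β • H, A⁆⁆).im = 0 ∧ 0 ≤ (gibbsC β H ⁅A, ⁅β • H, A⁆⁆).re ∧
    duhamel β H A A ≥
      gibbs β H (A * A) * Φ (gibbs β H ⁅A, ⁅β • H, A⁆⁆ / (4 * gibbs β H (A * A))) := by
  subst hH
  rw [g_duh β d A hA, gibbs, gibbs, g_AA β d A hA, g_comm β d A hA]
  simp only [Complex.ofReal_re, Complex.ofReal_im]
  have hZ : 0 < ∑ i, Real.exp (-β * d i) :=
    Finset.sum_pos (fun i _ => Real.exp_pos _) Finset.univ_nonempty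
  set Z := ∑ i, Real.exp (-β * d i)
  have hsw : ∀ i j, ‖A i j‖ = ‖A j i‖ := by
    intro i j
    rw [← hA.apply i j]; simp
  have hrel : ∀ i j, Real.exp (-β * d i) * Real.exp (β * d i - β * d j) = Real.exp (-β * d j) := by
    intro i j; rw [← Real.exp_add]; ring_nf
  set r : n × n → ℝ := fun x => (β * d x.1 - β * d x.2) / 2 with hr
  set m : n × n → ℝ := fun x =>
    Real.exp (-β * d x.1) * ‖A x.1 x.2‖^2 * ((1 + Real.exp (β * d x.1 - β * d x.2)) / 2) / Z with hm
  have hm0 : ∀ x, 0 ≤ m x := fun x => by simp only [hm]; positivity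
  -- symmetrisation
  have hsym : ∀ f : n → n → ℝ, ∑ i, ∑ j, f i j = ∑ x : n × n, (f x.1 x.2 + f x.2 x.1) / 2 := by
    intro f
    rw [Fintype.sum_prod_type (f := fun x : n × n => (f x.1 x.2 + f x.2 x.1) / 2)]
    simp only [add_div, Finset.sum_add_distrib, ← Finset.sum_div]
    rw [Finset.sum_comm (f := fun i j => f j i)]
    ring
  have eb : (∑ i, ∑ j, Real.exp (-β * d i) * ‖A i j‖^2) / Z = ∑ x, m x := by
    rw [hsym, Finset.sum_div]
    refine Finset.sum_congr rfl fun x _ => ?_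
    simp only [hm]
    rw [hsw x.2 x.1, ← hrel x.1 x.2]
    ring
  have ec : (∑ i, ∑ j, Real.exp (-β * d i) * (2 * (β * d j - β * d i)) * ‖A i j‖^2) / Z
      = 4 * ∑ x, m x * (r x * Real.tanh (r x)) := by
    rw [hsym, Finset.sum_div, Finset.mul_sum]
    refine Finset.sum_congr rfl fun x _ => ?_
    simp only [hm, hr]
    have ht := tanh_term (β * d x.1 - β * d x.2)
    rw [hsw x.2 x.1, ← hrel x.1 x.2]
    have : 4 * (Real.exp (-β * d x.1) * ‖A x.1 x.2‖^2 * ((1 + Real.exp (β * d x.1 - β * d x.2)) / 2) / Z *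
      ((β * d x.1 - β * d x.2) / 2 * Real.tanh ((β * d x.1 - β * d x.2) / 2))) =
      Real.exp (-β * d x.1) * ‖A x.1 x.2‖^2 / Z * (β * d x.1 - β * d x.2) * 
       ((1 + Real.exp (β * d x.1 - β * d x.2)) * Real.tanh ((β * d x.1 - β * d x.2) / 2)) := by ring
    rw [this, ht]
    ring
  have ed : (∑ i, ∑ j, Real.exp (-β * d i) * ‖A i j‖^2 *
       ((1 + Real.exp (β * d i - β * d j)) / 2 * Lf ((β * d i - β * d j) / 2))) / Z
       = ∑ x, m x * Lf (r x) := by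
    rw [Fintype.sum_prod_type, Finset.sum_div]
    refine Finset.sum_congr rfl fun i _ => ?_
    rw [Finset.sum_div]
    refine Finset.sum_congr rfl fun j _ => ?_
    simp only [hm, hr]
    ring
  have hb : 0 < ∑ x, m x := by
    obtain ⟨i, j, hij⟩ : ∃ i j, A i j ≠ 0 := by
      by_contra! h
      exact hA0 (by ext i j; simpa using h i j)
    refine Finset.sum_pos' (fun x _ => hm0 x) ⟨(i, j), Finset.mem_univ _, ?_⟩
    simp only [hm]
    have : 0 < ‖A i j‖ := norm_pos_iff.2 hij
    positivity
  have hc : 0 ≤ ∑ x, m x * (r x * Real.tanh (r x)) := by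
    apply Finset.sum_nonneg
    intro i _
    apply mul_nonneg (hm0 i)
    rcases le_total 0 (r i) with h | h
    · exact mul_nonneg h (tanh_nn h)
    · have := tanh_nn (r := - r i) (by linarith)
      rw [Real.tanh_neg] at this
      nlinarith
  rw [eb, ec, ed]
  refine ⟨hb, trivial, by positivity, ?_⟩
  rw [mul_div_mul_left _ _ (by norm_num : (4:ℝ) ≠ 0)]
  exact jensen Finset.univ m r (fun x _ => hm0 x) hb Φ hΦ hΦ0

end

theorem stmt4 {n : Type*} [Fintype n] [DecidableEq n] [Nonempty n]
    (β : ℝ) (hβ : 0 < β) (H A : Matrix n n ℂ)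
    (hH : H.IsHermitian) (hA : A.IsHermitian) (hA0 : A ≠ 0)
    (Φ : ℝ → ℝ) (hΦ : ∀ r : ℝ, 0 < r → Φ (r * Real.tanh r) = Real.tanh r / r)
    (hΦ0 : Φ 0 = 1) :
    0 < gibbs β H (A * A) ∧
    (gibbsC β H ⁅A, ⁅β • H, A⁆⁆).im = 0 ∧ 0 ≤ (gibbsC β H ⁅A, ⁅β • H, A⁆⁆).re ∧
    duhamel β H A A ≥
      gibbs β H (A * A) * Φ (gibbs β H ⁅A, ⁅β • H, A⁆⁆ / (4 * gibbs β H (A * A))) := by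
  obtain ⟨U, D, hU1, hU2, hD, hHU⟩ : ∃ (U : Matrix n n ℂ) (D : Matrix n n ℂ), Uᴴ * U = 1 ∧ U * Uᴴ = 1 ∧
      D = diagonal (fun i => (hH.eigenvalues i : ℂ)) ∧ H = U * D * Uᴴ := by
    refine ⟨hH.eigenvectorUnitary, _, ?_, ?_, rfl, ?_⟩
    · exact (Matrix.mem_unitaryGroup_iff'.1 hH.eigenvectorUnitary.2)
    · exact (Matrix.mem_unitaryGroup_iff.1 hH.eigenvectorUnitary.2)
    · have := hH.spectral_theorem
      rw [Unitary.conjStarAlgAut_apply] at this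
      exact this
  have hinv : U⁻¹ = Uᴴ := Matrix.inv_eq_right_inv hU2
  have hUu : IsUnit U := IsUnit.of_mul_eq_one _ hU2
  have hd : IsUnit U.det := (Matrix.isUnit_iff_isUnit_det U).1 hUu
  rw [← hinv] at hHU
  obtain ⟨B, hB⟩ : ∃ B, B = Uᴴ * A * U := ⟨_, rfl⟩
  have hBh : B.IsHermitian := by
    rw [hB]; exact Matrix.isHermitian_conjTranspose_mul_mul U hA
  have hAB : A = U * B * U⁻¹ := by
    rw [hB, hinv]
    calc A = (U * Uᴴ) * A * (U * Uᴴ) := by rw [hU2]; simp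
      _ = _ := by simp only [Matrix.mul_assoc]
  have hB0 : B ≠ 0 := by
    rintro h
    apply hA0
    rw [hAB, h]; simp
  have main := main_diag β hH.eigenvalues B hBh hB0 Φ hΦ hΦ0 D hD
  have hmul : ∀ X Y : Matrix n n ℂ, U * X * U⁻¹ * (U * Y * U⁻¹) = U * (X * Y) * U⁻¹ := by
    intro X Y
    simp only [Matrix.mul_assoc, Matrix.nonsing_inv_mul_cancel_left _ _ hd]
  have hsub : ∀ X Y : Matrix n n ℂ, U * X * U⁻¹ - U * Y * U⁻¹ = U * (X - Y) * U⁻¹ := by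
    intro X Y
    rw [Matrix.mul_sub, Matrix.sub_mul]
  have hsm : ∀ (t : ℝ) (X : Matrix n n ℂ), t • (U * X * U⁻¹) = U * (t • X) * U⁻¹ := by
    intro t X; simp
  have e1 : gibbsC β H (A * A) = gibbsC β D (B * B) := by
    rw [hHU, hAB, hmul, gibbsC_conj _ _ _ _ hUu]
  have e2 : gibbsC β H ⁅A, ⁅β • H, A⁆⁆ = gibbsC β D ⁅B, ⁅β • D, B⁆⁆ := by
    rw [hHU, hAB]
    simp only [Ring.lie_def, hsm, hmul, hsub]
    rw [gibbsC_conj _ _ _ _ hUu]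
  have e3 : duhamel β H A A = duhamel β D B B := by
    have : ∀ t : ℝ, gibbsC β H (NormedSpace.exp ((t * β) • H) * Aᴴ *
      NormedSpace.exp ((-(t * β)) • H) * A) = gibbsC β D (NormedSpace.exp ((t * β) • D) * Bᴴ *
      NormedSpace.exp ((-(t * β)) • D) * B) := by
      intro t
      rw [hA.eq, hBh.eq, hHU, hAB, hsm, hsm, Matrix.exp_conj _ _ hUu, Matrix.exp_conj _ _ hUu, hmul, hmul,
        hmul, gibbsC_conj _ _ _ _ hUu]
    rw [duhamel, duhamel, duhamelC, duhamelC]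
    simp only [this]
  rw [gibbs, gibbs, e1, e2, e3]
  exact main
end
end
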